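/- For Q = (1/d²) Σ_{P ∈ 𝒫_n} P^{⊗4} on (ℂ^d)^{⊗4} with d = 2^n, one has Σ_{ρ ∈ S_4} Tr[Q T_ρ] = 4(d+1)(d+2), and consequently Tr[Q Π_4^{sym}] / Tr[Π_4^{sym}] = 4 / (d(d+3)). -/

import Mathlib

open Matrix BigOperators
open scoped Classical

/-- Tensor power of a matrix: `O^{⊗k}` acting on `ι^k`. -/
noncomputable def tensorPow {ι : Type} [Fintype ι] (O : Matrix ι ι ℂ) (k : ℕ) :
    Matrix (Fin k → ι) (Fin k → ι) ℂ :=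
  fun x y => ∏ i, O (x i) (y i)

/-- Permutation operator `T_ρ` on `H^{⊗k}`: `T_ρ (v_1 ⊗ ⋯ ⊗ v_k) = v_{ρ⁻¹(1)} ⊗ ⋯`. -/
noncomputable def permOp (ι : Type) [Fintype ι] {k : ℕ} (ρ : Equiv.Perm (Fin k)) :
    Matrix (Fin k → ι) (Fin k → ι) ℂ :=
  fun x y => if x = y ∘ ρ.symm then 1 else 0

/-- Unnormalized projector onto symmetric subspace. -/
noncomputable def symProj (ι : Type) [Fintype ι] (k : ℕ) :
    Matrix (Fin k → ι) (Fin k → ι) ℂ :=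
  ∑ ρ : Equiv.Perm (Fin k), permOp ι ρ

/-- Single-qubit Pauli matrices I, X, Y, Z. -/
noncomputable def pauli : Fin 4 → Matrix (Fin 2) (Fin 2) ℂ
  | 0 => 1
  | 1 => !![0, 1; 1, 0]
  | 2 => !![0, -Complex.I; Complex.I, 0]
  | 3 => !![1, 0; 0, -1]

/-- Pauli string `P_{s 0} ⊗ ⋯ ⊗ P_{s (n-1)}` on `n` qubits. -/
noncomputable def pauliString {n : ℕ} (s : Fin n → Fin 4) :
    Matrix (Fin n → Fin 2) (Fin n → Fin 2) ℂ :=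
  fun x y => ∏ i, pauli (s i) (x i) (y i)

/-- `Q = (1/d²) Σ_P P^{⊗4}` on `(ℂ^d)^{⊗4}`, `d = 2^n`. -/
noncomputable def Qop (n : ℕ) :
    Matrix (Fin 4 → (Fin n → Fin 2)) (Fin 4 → (Fin n → Fin 2)) ℂ :=
  (((2 : ℂ) ^ n) ^ 2)⁻¹ • ∑ s : Fin n → Fin 4, tensorPow (pauliString s) 4

/-- Real integer version of Pauli matrices (with `Y` replaced by `Y / i`). -/
def paulInt : Fin 4 → Fin 2 → Fin 2 → ℤ
  | 0 => fun x y => if x = y then 1 else 0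
  | 1 => fun x y => if x = y then 0 else 1
  | 2 => fun x y => if x = y then 0 else if x = 0 then -1 else 1
  | 3 => fun x y => if x = y then (if x = 0 then 1 else -1) else 0

/-- Single-qubit value of the trace sum. -/
def Fint (ρ : Equiv.Perm (Fin 4)) : ℤ :=
  ∑ a : Fin 4, ∑ y : Fin 4 → Fin 2, ∏ i, paulInt a (y i) (y (ρ.symm i))

/-- Single-qubit value of the trace of the permutation operator. -/
def Gint (ρ : Equiv.Perm (Fin 4)) : ℤ :=
  ∑ y : Fin 4 → Fin 2, ∏ i, paulInt 0 (y i) (y (ρ.symm i))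

lemma Fint_sum (g : ℤ → ℂ) : ∑ ρ, g (Fint ρ) = 4 * g 16 + 12 * g 8 + 8 * g 4 := by
  have h : (Finset.univ.val.map Fint : Multiset ℤ)
      = Multiset.replicate 4 16 + Multiset.replicate 12 8 + Multiset.replicate 8 4 := by
    decide +kernel
  have h2 : ∑ ρ, g (Fint ρ) = ((Finset.univ.val.map Fint).map g).sum := by
    rw [Multiset.map_map]; rfl
  rw [h2, h]
  simp
  ring

lemma Gint_sum (g : ℤ → ℂ) :
    ∑ ρ, g (Gint ρ) = g 16 + 6 * g 8 + 11 * g 4 + 6 * g 2 := by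
  have h : (Finset.univ.val.map Gint : Multiset ℤ)
      = Multiset.replicate 1 16 + Multiset.replicate 6 8 + Multiset.replicate 11 4
        + Multiset.replicate 6 2 := by
    decide +kernel
  have h2 : ∑ ρ, g (Gint ρ) = ((Finset.univ.val.map Gint).map g).sum := by
    rw [Multiset.map_map]; rfl
  rw [h2, h]
  simp
  ring

lemma pauli_prod (a : Fin 4) (u v : Fin 4 → Fin 2) :
    ∏ i, pauli a (u i) (v i) = ((∏ i, paulInt a (u i) (v i) : ℤ) : ℂ) := by
  have key : ∃ c : ℂ, c ^ 4 = 1 ∧ ∀ x y, pauli a x y = c * (paulInt a x y : ℂ) := by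
    fin_cases a
    · refine ⟨1, by simp, fun x y => ?_⟩
      fin_cases x <;> fin_cases y <;> simp [pauli, paulInt]
    · refine ⟨1, by simp, fun x y => ?_⟩
      fin_cases x <;> fin_cases y <;> simp [pauli, paulInt]
    · refine ⟨Complex.I, by simp, fun x y => ?_⟩
      fin_cases x <;> fin_cases y <;> simp [pauli, paulInt]
    · refine ⟨1, by simp, fun x y => ?_⟩
      fin_cases x <;> fin_cases y <;> simp [pauli, paulInt]
  obtain ⟨c, hc, h⟩ := key
  simp only [h, Finset.prod_mul_distrib, Finset.prod_const, Finset.card_univ, Fintype.card_fin, hc,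
    one_mul]
  push_cast
  rfl

lemma sum_swap {n : ℕ} (h : Fin n → Fin 2 → Fin 2 → ℂ) (σ : Fin 4 → Fin 4) :
    ∑ x : Fin 4 → Fin n → Fin 2, ∏ i, ∏ j, h j (x i j) (x (σ i) j)
      = ∏ j, ∑ y : Fin 4 → Fin 2, ∏ i, h j (y i) (y (σ i)) := by
  rw [Fintype.prod_sum, ← Equiv.sum_comp (Equiv.piComm fun (_ : Fin n) (_ : Fin 4) => Fin 2)]
  refine Finset.sum_congr rfl fun x _ => ?_
  rw [Finset.prod_comm]
  rfl

lemma trace_mul_permOp {ι : Type} [Fintype ι] (A : Matrix (Fin 4 → ι) (Fin 4 → ι) ℂ)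
    (ρ : Equiv.Perm (Fin 4)) :
    (A * permOp ι ρ).trace = ∑ x, A x (x ∘ ρ.symm) := by
  simp [Matrix.trace, Matrix.mul_apply, permOp]

lemma trace_Q (n : ℕ) (ρ : Equiv.Perm (Fin 4)) :
    (Qop n * permOp (Fin n → Fin 2) ρ).trace
      = (((2 : ℂ) ^ n) ^ 2)⁻¹ * (Fint ρ : ℂ) ^ n := by
  rw [trace_mul_permOp]
  simp only [Qop, Matrix.smul_apply, smul_eq_mul, ← Finset.mul_sum, Matrix.sum_apply]
  congr 1
  rw [Finset.sum_comm]
  simp only [tensorPow, pauliString, Function.comp]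
  have : ∀ s : Fin n → Fin 4,
      ∑ x : Fin 4 → Fin n → Fin 2, ∏ i, ∏ j, pauli (s j) (x i j) (x (ρ.symm i) j)
      = ∏ j, ((∑ y : Fin 4 → Fin 2, ∏ i, paulInt (s j) (y i) (y (ρ.symm i)) : ℤ) : ℂ) := by
    intro s
    rw [sum_swap (fun j => pauli (s j))]
    simp only [pauli_prod]
    push_cast
    rfl
  simp only [this]
  rw [Fint, Int.cast_sum]
  have h3 := Fintype.prod_sum (fun (_ : Fin n) (a : Fin 4) =>
    ((∑ y : Fin 4 → Fin 2, ∏ i, paulInt a (y i) (y (ρ.symm i)) : ℤ) : ℂ))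
  rw [← h3]
  simp

lemma trace_T (n : ℕ) (ρ : Equiv.Perm (Fin 4)) :
    (permOp (Fin n → Fin 2) ρ).trace = (Gint ρ : ℂ) ^ n := by
  have h1 : (permOp (Fin n → Fin 2) ρ).trace
      = ∑ x : Fin 4 → Fin n → Fin 2, ∏ i, ∏ j, pauli 0 (x i j) (x (ρ.symm i) j) := by
    refine Finset.sum_congr rfl fun x _ => ?_
    simp only [Matrix.diag, permOp, pauli, Matrix.one_apply, Finset.prod_ite_zero,
      Finset.prod_const_one, funext_iff, Function.comp, Finset.mem_univ, true_imp_iff]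
  rw [h1, sum_swap (fun _ => pauli 0)]
  simp only [pauli_prod, Finset.prod_const, Finset.card_univ, Fintype.card_fin, Gint]
  push_cast
  rfl



/-- `Σ_{ρ ∈ S_4} Tr[Q T_ρ] = 4(d+1)(d+2)` and
`Tr[Q Π_4^{sym}]/Tr[Π_4^{sym}] = 4/(d(d+3))` with `d = 2^n`. -/
theorem sum_trace_Qop_permOp (n : ℕ) :
    (∑ ρ : Equiv.Perm (Fin 4),
        (Qop n * permOp (Fin n → Fin 2) ρ).trace)
      = 4 * ((2 : ℂ) ^ n + 1) * ((2 : ℂ) ^ n + 2) ∧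
    (Qop n * symProj (Fin n → Fin 2) 4).trace / (symProj (Fin n → Fin 2) 4).trace
      = 4 / ((2 : ℂ) ^ n * ((2 : ℂ) ^ n + 3)) := by
  have e16 : (16 : ℂ) ^ n = (2 ^ n) ^ 4 := by rw [← pow_mul, mul_comm, pow_mul]; norm_num
  have e8 : (8 : ℂ) ^ n = (2 ^ n) ^ 3 := by rw [← pow_mul, mul_comm, pow_mul]; norm_num
  have e4 : (4 : ℂ) ^ n = (2 ^ n) ^ 2 := by rw [← pow_mul, mul_comm, pow_mul]; norm_num
  have hd : (2 : ℂ) ^ n ≠ 0 := pow_ne_zero _ two_ne_zero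
  have first : (∑ ρ : Equiv.Perm (Fin 4), (Qop n * permOp (Fin n → Fin 2) ρ).trace)
      = 4 * ((2 : ℂ) ^ n + 1) * ((2 : ℂ) ^ n + 2) := by
    simp only [trace_Q, ← Finset.mul_sum]
    rw [Fint_sum (fun z => (z : ℂ) ^ n)]
    push_cast
    rw [e16, e8, e4]
    field_simp
    ring
  refine ⟨first, ?_⟩
  have second : (symProj (Fin n → Fin 2) 4).trace
      = (2 : ℂ) ^ n * (2 ^ n + 1) * (2 ^ n + 2) * (2 ^ n + 3) := by
    simp only [symProj, Matrix.trace_sum, trace_T]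
    rw [Gint_sum (fun z => (z : ℂ) ^ n)]
    push_cast
    rw [e16, e8, e4]
    ring
  have third : (Qop n * symProj (Fin n → Fin 2) 4).trace
      = 4 * ((2 : ℂ) ^ n + 1) * ((2 : ℂ) ^ n + 2) := by
    rw [← first, symProj, Matrix.mul_sum, Matrix.trace_sum]
  rw [second, third]
  have p : ∀ k : ℕ, (2 : ℂ) ^ n + ((k : ℕ) : ℂ) ≠ 0 := by
    intro k
    have : 2 ^ n + k ≠ 0 := by positivity
    exact_mod_cast this
  have p1 : (2 : ℂ) ^ n + 1 ≠ 0 := by simpa using p 1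
  have p2 : (2 : ℂ) ^ n + 2 ≠ 0 := by simpa using p 2
  have p3 : (2 : ℂ) ^ n + 3 ≠ 0 := by simpa using p 3
  field_simp
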